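/- Let F₂[u,v] be the polynomial ring over F₂ in two variables u, v, let F₂[t] be the polynomial ring in one variable t, and let Δ : F₂[u,v] → F₂[u,v] ⊗ F₂[t] (tensor product over F₂) be the F₂-algebra homomorphism determined by Δ(u) = u⊗1 + 1⊗t and Δ(v) = v⊗1. Then Δ(u² + uv) = (u² + uv)⊗1 + v⊗t + 1⊗t², and consequently Δ maps the F₂-subalgebra A of F₂[u,v] generated by v and u² + uv into the image of the canonical map A ⊗ F₂[t] → F₂[u,v] ⊗ F₂[t]. -/

import Mathlib

open MvPolynomial TensorProduct

/-- The coaction `Δ : F₂[u,v] → F₂[u,v] ⊗ F₂[t]` with `Δ(u) = u⊗1 + 1⊗t`, `Δ(v) = v⊗1`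
(here `u = X 0`, `v = X 1`). -/
noncomputable def coactionDelta :
    MvPolynomial (Fin 2) (ZMod 2) →ₐ[ZMod 2]
      (MvPolynomial (Fin 2) (ZMod 2) ⊗[ZMod 2] Polynomial (ZMod 2)) :=
  aeval ![(X 0 : MvPolynomial (Fin 2) (ZMod 2)) ⊗ₜ[ZMod 2] (1 : Polynomial (ZMod 2)) +
      (1 : MvPolynomial (Fin 2) (ZMod 2)) ⊗ₜ[ZMod 2] Polynomial.X,
    (X 1 : MvPolynomial (Fin 2) (ZMod 2)) ⊗ₜ[ZMod 2] (1 : Polynomial (ZMod 2))]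

/-!
In characteristic two, squaring is additive, so the cross term of `(u ⊗ 1 + 1 ⊗ t) ^ 2` vanishes,
while `(u ⊗ 1 + 1 ⊗ t) * (v ⊗ 1)` contributes `v ⊗ t`. Every left tensor factor in the resulting
value of `Δ (u ^ 2 + u * v)` is again in `A = F₂[v, u ^ 2 + u * v]`. As the image of `A ⊗ F₂[t]` is
a subalgebra, it suffices that it contains the values of `Δ` on the two generators.
-/

theorem add_self_eq_zero_of_charTwo (R : Type*) {M : Type*} [Semiring R] [CharP R 2]
    [AddCommMonoid M] [Module R M] (x : M) : x + x = 0 := by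
  rw [← two_smul R x, CharTwo.two_eq_zero, zero_smul]

theorem add_sq_of_commute_of_charTwo (R : Type*) {A : Type*} [CommSemiring R] [CharP R 2]
    [Semiring A] [Algebra R A] {x y : A} (h : Commute x y) : (x + y) ^ 2 = x ^ 2 + y ^ 2 := by
  rw [h.add_sq, mul_assoc, two_mul, add_self_eq_zero_of_charTwo R, add_zero]

section

variable {R A B : Type*} [CommSemiring R] [Semiring A] [Semiring B] [Algebra R A] [Algebra R B]

-- `⊗ₜ` binds tighter than `^`: unparenthesised, `1 ⊗ₜ t ^ 2` also means `(1 ⊗ₜ t) ^ 2`.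
theorem map_sq_add_mul_of_charTwo [CharP R 2] {φ : A →ₐ[R] A ⊗[R] B} {u v : A} {t : B}
    (hu : φ u = u ⊗ₜ 1 + 1 ⊗ₜ t) (hv : φ v = v ⊗ₜ 1) :
    φ (u ^ 2 + u * v) = (u ^ 2 + u * v) ⊗ₜ 1 + v ⊗ₜ t + (1 ⊗ₜ t) ^ 2 := by
  have hu_sq : φ u ^ 2 = (u ^ 2) ⊗ₜ 1 + (1 ⊗ₜ t) ^ 2 := by
    rw [hu, add_sq_of_commute_of_charTwo R ((Commute.one_right u).tmul (Commute.one_left t)),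
      Algebra.TensorProduct.tmul_pow, one_pow]
  have huv : φ u * φ v = (u * v) ⊗ₜ 1 + v ⊗ₜ t := by
    simp only [hu, hv, add_mul, Algebra.TensorProduct.tmul_mul_tmul, one_mul, mul_one]
  rw [map_add, map_pow, map_mul, hu_sq, huv, add_tmul]
  abel

theorem tmul_mem_range_map_val {S : Subalgebra R A} {a : A} (ha : a ∈ S) (b : B) :
    a ⊗ₜ[R] b ∈ (Algebra.TensorProduct.map S.val (AlgHom.id R B)).range :=
  ⟨⟨a, ha⟩ ⊗ₜ b, Algebra.TensorProduct.map_tmul ..⟩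

theorem coactionDelta_maps_invariants_general [CharP R 2] {φ : A →ₐ[R] A ⊗[R] B} {u v : A} {t : B}
    (hu : φ u = u ⊗ₜ 1 + 1 ⊗ₜ t) (hv : φ v = v ⊗ₜ 1) :
    φ (u ^ 2 + u * v) = (u ^ 2 + u * v) ⊗ₜ 1 + v ⊗ₜ t + (1 ⊗ₜ t) ^ 2 ∧
      ∀ p ∈ Algebra.adjoin R {v, u ^ 2 + u * v},
        φ p ∈ Set.range (Algebra.TensorProduct.map (Algebra.adjoin R {v, u ^ 2 + u * v}).val
          (AlgHom.id R B)) := by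
  have hw := map_sq_add_mul_of_charTwo hu hv
  refine ⟨hw, ?_⟩
  set S := Algebra.adjoin R {v, u ^ 2 + u * v}
  have hvS : v ∈ S := Algebra.subset_adjoin (Set.mem_insert _ _)
  have hwS : u ^ 2 + u * v ∈ S := Algebra.subset_adjoin (Set.mem_insert_of_mem _ rfl)
  suffices S ≤ (Algebra.TensorProduct.map S.val (AlgHom.id R B)).range.comap φ from
    fun _ hp ↦ this hp
  refine Algebra.adjoin_le ?_
  rintro _ (rfl | rfl)
  · rw [SetLike.mem_coe, Subalgebra.mem_comap, hv]
    exact tmul_mem_range_map_val hvS 1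
  · rw [SetLike.mem_coe, Subalgebra.mem_comap, hw]
    exact add_mem (add_mem (tmul_mem_range_map_val hwS 1) (tmul_mem_range_map_val hvS t))
      (pow_mem (tmul_mem_range_map_val (one_mem S) t) 2)

end

theorem coactionDelta_X_zero :
    coactionDelta (X 0) = X 0 ⊗ₜ[ZMod 2] 1 + 1 ⊗ₜ[ZMod 2] Polynomial.X :=
  aeval_X _ 0

theorem coactionDelta_X_one : coactionDelta (X 1) = X 1 ⊗ₜ[ZMod 2] 1 :=
  aeval_X _ 1

/-- `Δ(u² + uv) = (u² + uv)⊗1 + v⊗t + 1⊗t²`, and consequently `Δ` maps the subalgebra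
`A = F₂[v, u² + uv]` into the image of the canonical map `A ⊗ F₂[t] → F₂[u,v] ⊗ F₂[t]`. -/
theorem coactionDelta_maps_invariants :
    coactionDelta ((X 0 : MvPolynomial (Fin 2) (ZMod 2)) ^ 2 + X 0 * X 1) =
        ((X 0 : MvPolynomial (Fin 2) (ZMod 2)) ^ 2 + X 0 * X 1) ⊗ₜ[ZMod 2]
            (1 : Polynomial (ZMod 2)) +
          (X 1 : MvPolynomial (Fin 2) (ZMod 2)) ⊗ₜ[ZMod 2] Polynomial.X +
          (1 : MvPolynomial (Fin 2) (ZMod 2)) ⊗ₜ[ZMod 2] Polynomial.X ^ 2 ∧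
      ∀ p ∈ Algebra.adjoin (ZMod 2)
          {(X 1 : MvPolynomial (Fin 2) (ZMod 2)), X 0 ^ 2 + X 0 * X 1},
        coactionDelta p ∈ Set.range
          (Algebra.TensorProduct.map
            (Algebra.adjoin (ZMod 2)
              {(X 1 : MvPolynomial (Fin 2) (ZMod 2)), X 0 ^ 2 + X 0 * X 1}).val
            (AlgHom.id (ZMod 2) (Polynomial (ZMod 2)))) :=
  coactionDelta_maps_invariants_general coactionDelta_X_zero coactionDelta_X_one
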